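/- Let R_{abcd} have Riemann symmetries on Minkowski space, n^a a unit timelike vector, and define Y_{ac} = R_{abcd} n^b n^d, Z_{ac} = *R_{abcd} n^b n^d, X_{ac} = *R*_{abcd} n^b n^d, and the Ricci tensor R_{bd} = g^{ae} R_{bade}. Then the orthogonal splitting of the Ricci tensor holds: R_{ac} = Z^{db} ε_{cdb} n_a + n_c Y^d{}_d n_a − X_{ac} − Y_{ac} + n_c Z^{db} ε_{adb} + h_{ac} X^d{}_d. -/

import Mathlib

noncomputable section

/-- The Minkowski metric `diag(-1,1,1,1)` on `ℝ⁴`. -/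
def gm : Fin 4 → Fin 4 → ℝ := fun a b => if a = b then (if a = 0 then -1 else 1) else 0

/-- The totally antisymmetric volume form with `η₀₁₂₃ = 1`. -/
def eta (a b c d : Fin 4) : ℝ :=
  ((((b.val : ℤ) - a.val).sign * ((c.val : ℤ) - a.val).sign * ((d.val : ℤ) - a.val).sign *
    ((c.val : ℤ) - b.val).sign * ((d.val : ℤ) - b.val).sign * ((d.val : ℤ) - c.val).sign : ℤ) : ℝ)

/-- Index lowering: `n_a = g_{ab} n^b`. -/
def lo (n : Fin 4 → ℝ) (a : Fin 4) : ℝ := ∑ b, gm a b * n b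

/-- Spatial metric `h_{ab} = g_{ab} + n_a n_b`. -/
def hm (n : Fin 4 → ℝ) (a b : Fin 4) : ℝ := gm a b + lo n a * lo n b

/-- Spatial volume form `ε_{abc} = n^d η_{dabc}` of a unit timelike `n`. -/
def eps (n : Fin 4 → ℝ) (a b c : Fin 4) : ℝ := ∑ d, n d * eta d a b c

/-- A rank-4 tensor. -/
abbrev Tensor4 := Fin 4 → Fin 4 → Fin 4 → Fin 4 → ℝ

/-- `R_{abcd}` has the symmetries of a Riemann tensor. -/
structure RiemannSymm (R : Tensor4) : Prop where
  antisymm₁ : ∀ a b c d, R a b c d = - R b a c d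
  antisymm₂ : ∀ a b c d, R a b c d = - R a b d c
  pairSymm : ∀ a b c d, R a b c d = R c d a b
  firstBianchi : ∀ a b c d,
    (1/6 : ℝ) * (R a b c d + R b c a d + R c a b d
      - R b a c d - R a c b d - R c b a d) = 0

/-- Left dual `*R_{abcd} = ½ η_{abpq} R^{pq}{}_{cd}`. -/
def dualL (R : Tensor4) (a b c d : Fin 4) : ℝ :=
  (1/2) * ∑ p, ∑ q, eta a b p q * (∑ r, ∑ s, gm p r * gm q s * R r s c d)

/-- Right dual `R*_{abcd} = ½ η_{pqcd} R_{ab}{}^{pq}`. -/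
def dualR (R : Tensor4) (a b c d : Fin 4) : ℝ :=
  (1/2) * ∑ p, ∑ q, eta p q c d * (∑ r, ∑ s, gm p r * gm q s * R a b r s)

/-- Double dual `*R*_{abcd} = ½ η_{ab}{}^{pq} R*_{pqcd}`. -/
def dualLR (R : Tensor4) : Tensor4 := dualL (dualR R)

/-- `Y_{ac} = R_{abcd} n^b n^d`. -/
def Yt (R : Tensor4) (n : Fin 4 → ℝ) (a c : Fin 4) : ℝ := ∑ b, ∑ d, R a b c d * n b * n d

/-- `Z_{ac} = *R_{abcd} n^b n^d`. -/
def Zt (R : Tensor4) (n : Fin 4 → ℝ) (a c : Fin 4) : ℝ := ∑ b, ∑ d, dualL R a b c d * n b * n d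

/-- `X_{ac} = *R*_{abcd} n^b n^d`. -/
def Xt (R : Tensor4) (n : Fin 4 → ℝ) (a c : Fin 4) : ℝ := ∑ b, ∑ d, dualLR R a b c d * n b * n d

/-- The Ricci tensor `R_{bd} = g^{ae} R_{bade}`. -/
def RicciOf (R : Tensor4) (b d : Fin 4) : ℝ := ∑ a, ∑ e, gm a e * R b a d e

/-- Independent-component reduction rules for a tensor with Riemann symmetries. -/
lemma riem_zero1 {R : Tensor4} (hR : RiemannSymm R) (a c d : Fin 4) : R a a c d = 0 := by
  linarith [hR.antisymm₁ a a c d]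

lemma riem_zero2 {R : Tensor4} (hR : RiemannSymm R) (a b c : Fin 4) : R a b c c = 0 := by
  linarith [hR.antisymm₂ a b c c]

lemma riem_bianchi {R : Tensor4} (hR : RiemannSymm R) :
    R 0 3 1 2 = R 0 2 1 3 - R 0 1 2 3 := by
  have h := hR.firstBianchi 0 1 2 3
  have := hR.antisymm₁ 1 0 2 3
  have := hR.antisymm₁ 2 1 0 3
  have := hR.antisymm₁ 2 0 1 3
  have := hR.pairSymm 1 2 0 3
  linarith

/-- The sign `g_{aa}` of the Minkowski metric. -/
def sg (a : Fin 4) : ℝ := if a = 0 then -1 else 1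

lemma sum_gm (a : Fin 4) (f : Fin 4 → ℝ) : ∑ b, gm a b * f b = sg a * f a := by
  simp [gm, sg]

lemma sum_gm2 (p q : Fin 4) (f : Fin 4 → Fin 4 → ℝ) :
    ∑ r, ∑ s, gm p r * gm q s * f r s = sg p * sg q * f p q := by
  simp [gm, sg]

lemma sign_two : Int.sign 2 = 1 := rfl

lemma sign_three : Int.sign 3 = 1 := rfl

lemma dualL_eq (T : Tensor4) (a b c d : Fin 4) :
    dualL T a b c d = (1/2) * ∑ p, ∑ q, eta a b p q * (sg p * sg q * T p q c d) := by
  unfold dualL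
  simp_rw [sum_gm2 _ _ (fun r s => T r s c d)]

lemma dualR_eq (T : Tensor4) (a b c d : Fin 4) :
    dualR T a b c d = (1/2) * ∑ p, ∑ q, eta p q c d * (sg p * sg q * T a b p q) := by
  unfold dualR
  simp_rw [sum_gm2 _ _ (fun r s => T a b r s)]

lemma dualL_comp {T : Tensor4} (h : ∀ a b c d, T a b c d = - T b a c d) (c d : Fin 4) :
    dualL T 0 0 c d = 0 ∧
    dualL T 0 1 c d = T 2 3 c d ∧
    dualL T 0 2 c d = -T 1 3 c d ∧
    dualL T 0 3 c d = T 1 2 c d ∧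
    dualL T 1 0 c d = -T 2 3 c d ∧
    dualL T 1 1 c d = 0 ∧
    dualL T 1 2 c d = -T 0 3 c d ∧
    dualL T 1 3 c d = T 0 2 c d ∧
    dualL T 2 0 c d = T 1 3 c d ∧
    dualL T 2 1 c d = T 0 3 c d ∧
    dualL T 2 2 c d = 0 ∧
    dualL T 2 3 c d = -T 0 1 c d ∧
    dualL T 3 0 c d = -T 1 2 c d ∧
    dualL T 3 1 c d = -T 0 2 c d ∧
    dualL T 3 2 c d = T 0 1 c d ∧
    dualL T 3 3 c d = 0 := by
  refine ⟨?_, ?_, ?_, ?_, ?_, ?_, ?_, ?_, ?_, ?_, ?_, ?_, ?_, ?_, ?_, ?_⟩ <;>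
    simp [dualL_eq, Fin.sum_univ_four, eta, sg, sign_two, sign_three] <;> linarith [h 0 1 c d, h 0 2 c d, h 0 3 c d, h 1 2 c d, h 1 3 c d, h 2 3 c d]

lemma dualR_comp {T : Tensor4} (h : ∀ a b c d, T a b c d = - T a b d c) (c d : Fin 4) :
    dualR T c d 0 0 = 0 ∧
    dualR T c d 0 1 = T c d 2 3 ∧
    dualR T c d 0 2 = -T c d 1 3 ∧
    dualR T c d 0 3 = T c d 1 2 ∧
    dualR T c d 1 0 = -T c d 2 3 ∧
    dualR T c d 1 1 = 0 ∧
    dualR T c d 1 2 = -T c d 0 3 ∧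
    dualR T c d 1 3 = T c d 0 2 ∧
    dualR T c d 2 0 = T c d 1 3 ∧
    dualR T c d 2 1 = T c d 0 3 ∧
    dualR T c d 2 2 = 0 ∧
    dualR T c d 2 3 = -T c d 0 1 ∧
    dualR T c d 3 0 = -T c d 1 2 ∧
    dualR T c d 3 1 = -T c d 0 2 ∧
    dualR T c d 3 2 = T c d 0 1 ∧
    dualR T c d 3 3 = 0 := by
  refine ⟨?_, ?_, ?_, ?_, ?_, ?_, ?_, ?_, ?_, ?_, ?_, ?_, ?_, ?_, ?_, ?_⟩ <;>
    simp [dualR_eq, Fin.sum_univ_four, eta, sg, sign_two, sign_three] <;> linarith [h c d 0 1, h c d 0 2, h c d 0 3, h c d 1 2, h c d 1 3, h c d 2 3]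

lemma dualR_antisymm₁ {R : Tensor4} (hR : RiemannSymm R) (a b c d : Fin 4) :
    dualR R a b c d = - dualR R b a c d := by
  rw [dualR_eq, dualR_eq, ← mul_neg, ← Finset.sum_neg_distrib]
  congr 1
  refine Finset.sum_congr rfl fun p _ => ?_
  rw [← Finset.sum_neg_distrib]
  refine Finset.sum_congr rfl fun q _ => ?_
  rw [hR.antisymm₁ a b p q]
  ring

lemma eps_comp (n : Fin 4 → ℝ) (f : Fin 4 → Fin 4 → ℝ) :
    (∑ d, ∑ b, f d b * eps n 0 d b =
      - n 1 * (f 2 3 - f 3 2) + n 2 * (f 1 3 - f 3 1) - n 3 * (f 1 2 - f 2 1)) ∧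
    (∑ d, ∑ b, f d b * eps n 1 d b =
      n 0 * (f 2 3 - f 3 2) - n 2 * (f 0 3 - f 3 0) + n 3 * (f 0 2 - f 2 0)) ∧
    (∑ d, ∑ b, f d b * eps n 2 d b =
      - n 0 * (f 1 3 - f 3 1) + n 1 * (f 0 3 - f 3 0) - n 3 * (f 0 1 - f 1 0)) ∧
    (∑ d, ∑ b, f d b * eps n 3 d b =
      n 0 * (f 1 2 - f 2 1) - n 1 * (f 0 2 - f 2 0) + n 2 * (f 0 1 - f 1 0)) := by
  refine ⟨?_, ?_, ?_, ?_⟩ <;> simp [Fin.sum_univ_four, eps, eta, sign_two, sign_three] <;> ring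

lemma sum_gm2_eps (n : Fin 4 → ℝ) (Z : Fin 4 → Fin 4 → ℝ) (c : Fin 4) :
    ∑ d, ∑ b, ∑ p, ∑ q, gm d p * gm b q * Z p q * eps n c d b =
      ∑ d, ∑ b, (sg d * sg b * Z d b) * eps n c d b := by
  refine Finset.sum_congr rfl fun d _ => Finset.sum_congr rfl fun b _ => ?_
  rw [← sum_gm2 d b Z]
  simp_rw [Finset.sum_mul]

/-- The splitting in homogeneous form, valid for every vector `n`. -/
lemma splitting_hom (R : Tensor4) (hR : RiemannSymm R) (n : Fin 4 → ℝ) (a c : Fin 4) :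
    (∑ a, ∑ b, gm a b * n a * n b) ^ 2 * RicciOf R a c =
      (∑ d, ∑ b, (sg d * sg b * Zt R n d b) * eps n c d b) * lo n a
        + lo n c * (∑ d, ∑ e, gm d e * Yt R n e d) * lo n a
        + lo n c * (∑ d, ∑ b, (sg d * sg b * Zt R n d b) * eps n a d b)
        + lo n a * lo n c * (∑ d, ∑ e, gm d e * Xt R n e d)
        - (∑ a, ∑ b, gm a b * n a * n b) * (- Xt R n a c - Yt R n a c
        + gm a c * (∑ d, ∑ e, gm d e * Xt R n e d)) := by
  have z1 := riem_zero1 hR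
  have z2 := riem_zero2 hR
  have bi := riem_bianchi hR
  have HL := fun c d => dualL_comp hR.antisymm₁ c d
  have HLR := fun c d => dualL_comp (dualR_antisymm₁ hR) c d
  have HR := fun c d => dualR_comp hR.antisymm₂ c d
  have g2 : ∑ a, ∑ b, gm a b * n a * n b = - n 0 ^ 2 + n 1 ^ 2 + n 2 ^ 2 + n 3 ^ 2 := by
    simp [Fin.sum_univ_four, gm]; ring
  have s0 : sg 0 = -1 := by simp [sg]
  have s1 : sg 1 = 1 := by simp [sg]
  have s2 : sg 2 = 1 := by simp [sg]
  have s3 : sg 3 = 1 := by simp [sg]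
  have gg : ∀ a b, gm a b = if a = b then sg a else 0 := fun a b => rfl
  have e := fun f => eps_comp n f
  have a0 := fun c d => hR.antisymm₁ 1 0 c d
  have a1 := fun c d => hR.antisymm₁ 2 0 c d
  have a2 := fun c d => hR.antisymm₁ 3 0 c d
  have a3 := fun c d => hR.antisymm₁ 2 1 c d
  have a4 := fun c d => hR.antisymm₁ 3 1 c d
  have a5 := fun c d => hR.antisymm₁ 3 2 c d
  have b0 := fun c d => hR.antisymm₂ c d 1 0
  have b1 := fun c d => hR.antisymm₂ c d 2 0
  have b2 := fun c d => hR.antisymm₂ c d 3 0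
  have b3 := fun c d => hR.antisymm₂ c d 2 1
  have b4 := fun c d => hR.antisymm₂ c d 3 1
  have b5 := fun c d => hR.antisymm₂ c d 3 2
  have c10 := hR.pairSymm 0 2 0 1
  have c20 := hR.pairSymm 0 3 0 1
  have c21 := hR.pairSymm 0 3 0 2
  have c30 := hR.pairSymm 1 2 0 1
  have c31 := hR.pairSymm 1 2 0 2
  have c32 := hR.pairSymm 1 2 0 3
  have c40 := hR.pairSymm 1 3 0 1
  have c41 := hR.pairSymm 1 3 0 2
  have c42 := hR.pairSymm 1 3 0 3
  have c43 := hR.pairSymm 1 3 1 2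
  have c50 := hR.pairSymm 2 3 0 1
  have c51 := hR.pairSymm 2 3 0 2
  have c52 := hR.pairSymm 2 3 0 3
  have c53 := hR.pairSymm 2 3 1 2
  have c54 := hR.pairSymm 2 3 1 3
  rw [g2]
  simp only [lo, RicciOf, sum_gm]
  simp only [Yt, Zt, Xt, dualLR]
  fin_cases a <;> fin_cases c <;>
  simp only [Fin.zero_eta, Fin.mk_one, Fin.reduceFinMk, e, gg, reduceIte, Fin.reduceEq] <;>
  simp only [Fin.sum_univ_four, s0, s1, s2, s3, HL, HLR, HR, z1, z2, a0, a1, a2, a3, a4, a5, b0, b1, b2, b3, b4, b5, c10, c20, c21, c30, c31, c32, c40, c41, c42, c43, c50, c51, c52, c53, c54, bi] <;>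
  ring

/-- Orthogonal splitting of the Ricci tensor:
`R_{ac} = Z^{db} ε_{cdb} n_a + n_c Y^d{}_d n_a − X_{ac} − Y_{ac} + n_c Z^{db} ε_{adb} + h_{ac} X^d{}_d`. -/
theorem ricci_orthogonal_splitting
    (R : Tensor4) (hR : RiemannSymm R)
    (n : Fin 4 → ℝ) (hn : (∑ a, ∑ b, gm a b * n a * n b) = -1) :
    ∀ a c : Fin 4,
      RicciOf R a c =
        (∑ d, ∑ b, ∑ p, ∑ q, gm d p * gm b q * Zt R n p q * eps n c d b) * lo n a
        + lo n c * (∑ d, ∑ e, gm d e * Yt R n e d) * lo n a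
        - Xt R n a c - Yt R n a c
        + lo n c * (∑ d, ∑ b, ∑ p, ∑ q, gm d p * gm b q * Zt R n p q * eps n a d b)
        + hm n a c * (∑ d, ∑ e, gm d e * Xt R n e d) := by
  intro a c
  have h := splitting_hom R hR n a c
  rw [hn] at h
  simp only [sum_gm2_eps, hm]
  linear_combination h
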